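/- The sequence μ(p,p,p) is strictly increasing, satisfies μ(p,p,p) < 3/√2 for every p ≥ 2, and converges to 3/√2 as p → ∞; moreover, for every y₀ in the open interval (1/2, 1) there exists p₀ such that μ(p,p,p) > 3/√2 − 2·y₀^p for all p ≥ p₀. -/

import Mathlib

/-- The vertex set of the tree `T_{p,q,r}`: a central vertex (`none`) together
with three arms of `p-1`, `q-1` and `r-1` vertices. -/
abbrev TVertex (p q r : ℕ) : Type := Option (Fin (p - 1) ⊕ (Fin (q - 1) ⊕ Fin (r - 1)))

/-- Entry recording an edge between positions `i` and `j` of a path. -/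
def pathEntry (i j : ℕ) : ℝ := if i + 1 = j ∨ j + 1 = i then 1 else 0

/-- Entry recording the edge from the central vertex to position `i` of an arm. -/
def tipEntry (i : ℕ) : ℝ := if i = 0 then 1 else 0

/-- The adjacency matrix of the tree `T_{p,q,r}`: a central vertex joined to one
end of each of three paths with `p-1`, `q-1`, and `r-1` vertices respectively. -/
def adjT (p q r : ℕ) : Matrix (TVertex p q r) (TVertex p q r) ℝ :=
  fun v w =>
    match v, w with
    | none, none => 0
    | none, some (Sum.inl i) => tipEntry i
    | none, some (Sum.inr (Sum.inl i)) => tipEntry i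
    | none, some (Sum.inr (Sum.inr i)) => tipEntry i
    | some (Sum.inl i), none => tipEntry i
    | some (Sum.inr (Sum.inl i)), none => tipEntry i
    | some (Sum.inr (Sum.inr i)), none => tipEntry i
    | some (Sum.inl i), some (Sum.inl j) => pathEntry i j
    | some (Sum.inr (Sum.inl i)), some (Sum.inr (Sum.inl j)) => pathEntry i j
    | some (Sum.inr (Sum.inr i)), some (Sum.inr (Sum.inr j)) => pathEntry i j
    | _, _ => 0

/-- `μ(p,q,r)`, the largest eigenvalue of the adjacency matrix of `T_{p,q,r}`. -/
noncomputable def muT (p q r : ℕ) : ℝ :=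
  sSup {μ : ℝ | ∃ x : TVertex p q r → ℝ, x ≠ 0 ∧ (adjT p q r).mulVec x = μ • x}

/-!
For a nonnegative symmetric matrix `A` with largest eigenvalue `λ`, a nonnegative `x ≠ 0` with
`c x ≤ A x` gives `c ≤ λ`, and a positive `x` with `A x ≤ c x` gives `λ ≤ c`. If `A` is moreover
irreducible, a proper principal submatrix has a strictly smaller largest eigenvalue: otherwise its
nonnegative eigenvector extended by zero would be a Perron vector of `A` with a zero entry. This
gives strict monotonicity, since `T_{p,p,p}` is a proper induced subgraph of `T_{p+1,p+1,p+1}`.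

The bounds come from test vectors depending only on the distance `k` to the centre. The vector
`(1/√2)^k` gives `μ ≤ 3/√2`. For `t > 1` the vector `sinh ((p - k) log t)` gives `t + 1/t ≤ μ` as
soon as the inequality at the centre, `2 t² - 1 ≤ t^(2p) (2 - t²)`, holds. Choosing
`t² = 2 - 2 y₀^p`, its right-hand side is `2 (2 y₀ (1 - y₀^p))^p`, which tends to infinity because
`2 y₀ > 1`, while `3/√2 - (t + 1/t) < 2 - t² = 2 y₀^p`.
-/

open Matrix Filter Topology

section MaxEigenvalue

variable {n : Type*} [Fintype n] {A : Matrix n n ℝ} {x : n → ℝ} {c : ℝ}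

lemma mul_dotProduct_le_of_smul_le_mulVec (hx : 0 ≤ x) (hc : c • x ≤ A *ᵥ x) :
    c * (x ⬝ᵥ x) ≤ x ⬝ᵥ A *ᵥ x := by
  rw [← smul_eq_mul, ← dotProduct_smul]
  exact dotProduct_le_dotProduct_of_nonneg_left hc hx

variable [DecidableEq n]

lemma mem_spectrum_iff_exists_mulVec_eq {K : Type*} [Field K] {A : Matrix n n K} {μ : K} :
    μ ∈ spectrum K A ↔ ∃ x, x ≠ 0 ∧ A *ᵥ x = μ • x := by
  rw [← spectrum_toLin', ← Module.End.hasEigenvalue_iff_mem_spectrum]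
  constructor
  · intro h
    obtain ⟨x, hx⟩ := h.exists_hasEigenvector
    exact ⟨x, hx.2, by simpa using hx.apply_eq_smul⟩
  · rintro ⟨x, hx0, hx⟩
    exact Module.End.hasEigenvalue_of_hasEigenvector
      ⟨Module.End.mem_eigenspace_iff.2 (by simpa using hx), hx0⟩

/-- The largest real eigenvalue of a square real matrix (the junk value `0` if there is none). -/
noncomputable def maxEigenvalue (A : Matrix n n ℝ) : ℝ := sSup (spectrum ℝ A)

open scoped MatrixOrder in
lemma posSemidef_maxEigenvalue_sub (hA : A.IsHermitian) :
    (algebraMap ℝ (Matrix n n ℝ) (maxEigenvalue A) - A).PosSemidef :=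
  Matrix.le_iff.1 <| le_algebraMap_of_spectrum_le
    (fun _ hμ ↦ le_csSup A.finite_real_spectrum.bddAbove hμ) hA.isSelfAdjoint

lemma exists_mulVec_eq_maxEigenvalue_smul [Nonempty n] (hA : A.IsHermitian) :
    ∃ x, x ≠ 0 ∧ A *ᵥ x = maxEigenvalue A • x := by
  have hne : (spectrum ℝ A).Nonempty :=
    ⟨_, hA.eigenvalues_mem_spectrum_real (Classical.arbitrary n)⟩
  exact mem_spectrum_iff_exists_mulVec_eq.1 (hne.csSup_mem A.finite_real_spectrum)

lemma dotProduct_algebraMap_sub_mulVec {R : Type*} [CommRing R] (A : Matrix n n R) (c : R)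
    (x : n → R) :
    x ⬝ᵥ (algebraMap R (Matrix n n R) c - A) *ᵥ x = c * (x ⬝ᵥ x) - x ⬝ᵥ A *ᵥ x := by
  simp [Algebra.algebraMap_eq_smul_one, sub_mulVec, smul_mulVec, dotProduct_sub]

lemma dotProduct_mulVec_le_maxEigenvalue_mul (hA : A.IsHermitian) (x : n → ℝ) :
    x ⬝ᵥ A *ᵥ x ≤ maxEigenvalue A * (x ⬝ᵥ x) := by
  have h := (posSemidef_maxEigenvalue_sub hA).dotProduct_mulVec_nonneg x
  rw [star_trivial, dotProduct_algebraMap_sub_mulVec] at h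
  exact sub_nonneg.1 h

lemma mulVec_eq_of_maxEigenvalue_mul_le_dotProduct (hA : A.IsHermitian)
    (hx : maxEigenvalue A * (x ⬝ᵥ x) ≤ x ⬝ᵥ A *ᵥ x) : A *ᵥ x = maxEigenvalue A • x := by
  have hzero : star x ⬝ᵥ (algebraMap ℝ (Matrix n n ℝ) (maxEigenvalue A) - A) *ᵥ x = 0 := by
    rw [star_trivial, dotProduct_algebraMap_sub_mulVec]
    linarith [dotProduct_mulVec_le_maxEigenvalue_mul hA x]
  have hker := ((posSemidef_maxEigenvalue_sub hA).dotProduct_mulVec_zero_iff x).1 hzero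
  rw [Algebra.algebraMap_eq_smul_one, sub_mulVec, smul_mulVec, one_mulVec, sub_eq_zero] at hker
  exact hker.symm

lemma le_maxEigenvalue_of_smul_le_mulVec (hA : A.IsHermitian) (hx : 0 ≤ x) (hx0 : x ≠ 0)
    (hc : c • x ≤ A *ᵥ x) : c ≤ maxEigenvalue A := by
  have hxx : 0 < x ⬝ᵥ x := by simpa using dotProduct_star_self_pos_iff.2 hx0
  exact le_of_mul_le_mul_right ((mul_dotProduct_le_of_smul_le_mulVec hx hc).trans
    (dotProduct_mulVec_le_maxEigenvalue_mul hA x)) hxx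

lemma mulVec_eq_of_maxEigenvalue_smul_le_mulVec (hA : A.IsHermitian) (hx : 0 ≤ x)
    (hc : maxEigenvalue A • x ≤ A *ᵥ x) : A *ᵥ x = maxEigenvalue A • x :=
  mulVec_eq_of_maxEigenvalue_mul_le_dotProduct hA (mul_dotProduct_le_of_smul_le_mulVec hx hc)

end MaxEigenvalue

section PerronFrobenius

variable {m n : Type*} [Fintype m] [Fintype n] {A : Matrix n n ℝ} {x : n → ℝ} {c : ℝ}

lemma mulVec_extend_zero_apply {R : Type*} [NonUnitalNonAssocSemiring R] (A : Matrix n n R)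
    {e : m → n} (he : e.Injective) (z : m → R) (i : m) :
    (A *ᵥ Function.extend e z 0) (e i) = (A.submatrix e e *ᵥ z) i :=
  (Fintype.sum_of_injective e he _ _
    (fun j hj ↦ by rw [Function.extend_apply' _ _ _ hj, Pi.zero_apply, mul_zero])
    (fun j ↦ congrArg (A (e i) (e j) * ·) (he.extend_apply z 0 j).symm)).symm

lemma pow_mulVec_eq_pow_smul [DecidableEq n] {R : Type*} [CommSemiring R] {A : Matrix n n R}
    {x : n → R} {c : R} (h : A *ᵥ x = c • x) (k : ℕ) : (A ^ k) *ᵥ x = c ^ k • x := by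
  induction k with
  | zero => simp
  | succ k ih => rw [pow_succ, ← mulVec_mulVec, h, mulVec_smul, ih, smul_smul, pow_succ']

lemma pos_of_isIrreducible_of_mulVec_eq (hA : A.IsIrreducible) (hx : 0 ≤ x) (hx0 : x ≠ 0)
    (h : A *ᵥ x = c • x) (i : n) : 0 < x i := by
  classical
  obtain ⟨j, hj⟩ := Function.ne_iff.1 hx0
  obtain ⟨k, -, hk⟩ := (isIrreducible_iff_exists_pow_pos hA.nonneg).1 hA i j
  have hpos : 0 < ((A ^ k) *ᵥ x) i :=
    Finset.sum_pos' (fun l _ ↦ mul_nonneg (pow_apply_nonneg hA.nonneg k i l) (hx l))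
      ⟨j, Finset.mem_univ j, mul_pos hk ((hx j).lt_of_ne' hj)⟩
  rw [pow_mulVec_eq_pow_smul h] at hpos
  exact (hx i).lt_of_ne' (right_ne_zero_of_mul hpos.ne')

variable [DecidableEq m] [DecidableEq n]

lemma exists_nonneg_mulVec_eq_maxEigenvalue_smul [Nonempty n] (hA : A.IsHermitian)
    (hA0 : ∀ i j, 0 ≤ A i j) : ∃ x, 0 ≤ x ∧ x ≠ 0 ∧ A *ᵥ x = maxEigenvalue A • x := by
  obtain ⟨x, hx0, hx⟩ := exists_mulVec_eq_maxEigenvalue_smul hA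
  have habs : maxEigenvalue A • |x| ≤ A *ᵥ |x| := fun i ↦
    calc maxEigenvalue A * |x i| ≤ |maxEigenvalue A * x i| := by
          rw [abs_mul]; gcongr; exact le_abs_self _
      _ = |∑ j, A i j * x j| := congrArg _ (congrFun hx i).symm
      _ ≤ ∑ j, |A i j * x j| := Finset.abs_sum_le_sum_abs _ _
      _ = ∑ j, A i j * |x j| := by simp only [abs_mul, abs_of_nonneg (hA0 _ _)]
  exact ⟨|x|, abs_nonneg x, by simpa using hx0,
    mulVec_eq_of_maxEigenvalue_smul_le_mulVec hA (abs_nonneg x) habs⟩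

lemma maxEigenvalue_le_of_mulVec_le_smul [Nonempty n] (hA : A.IsHermitian)
    (hA0 : ∀ i j, 0 ≤ A i j) (hx : ∀ i, 0 < x i) (hc : A *ᵥ x ≤ c • x) :
    maxEigenvalue A ≤ c := by
  obtain ⟨y, hy, hy0, hAy⟩ := exists_nonneg_mulVec_eq_maxEigenvalue_smul hA hA0
  have hyx : 0 < y ⬝ᵥ x := by
    obtain ⟨i, hi⟩ := Function.ne_iff.1 hy0
    exact Finset.sum_pos' (fun j _ ↦ mul_nonneg (hy j) (hx j).le)
      ⟨i, Finset.mem_univ i, mul_pos ((hy i).lt_of_ne' hi) (hx i)⟩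
  refine le_of_mul_le_mul_right ?_ hyx
  calc maxEigenvalue A * (y ⬝ᵥ x) = (A *ᵥ y) ⬝ᵥ x := by rw [hAy, smul_dotProduct, smul_eq_mul]
    _ = y ⬝ᵥ A *ᵥ x := by
      rw [dotProduct_mulVec, ← mulVec_transpose, ← conjTranspose_eq_transpose_of_trivial, hA.eq]
    _ ≤ y ⬝ᵥ (c • x) := dotProduct_le_dotProduct_of_nonneg_left hc hy
    _ = c * (y ⬝ᵥ x) := by rw [dotProduct_smul, smul_eq_mul]

lemma maxEigenvalue_submatrix_lt [Nonempty m] (hA : A.IsHermitian) (hirr : A.IsIrreducible)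
    {e : m → n} (he : e.Injective) (hne : ¬ e.Surjective) :
    maxEigenvalue (A.submatrix e e) < maxEigenvalue A := by
  obtain ⟨z, hz, hz0, hAz⟩ := exists_nonneg_mulVec_eq_maxEigenvalue_smul (hA.submatrix e)
    (fun i j ↦ hirr.nonneg (e i) (e j))
  set μ := maxEigenvalue (A.submatrix e e)
  set x := Function.extend e z 0
  have hx_range (i : m) : x (e i) = z i := he.extend_apply z 0 i
  have hx_compl {j : n} (hj : ¬ ∃ i, e i = j) : x j = 0 := Function.extend_apply' _ _ _ hj
  have hx : 0 ≤ x := fun j ↦ by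
    by_cases hj : ∃ i, e i = j
    · obtain ⟨i, rfl⟩ := hj
      exact (hz i).trans_eq (hx_range i).symm
    · exact (hx_compl hj).ge
  have hx0 : x ≠ 0 := fun h ↦ hz0 <| funext fun i ↦ (hx_range i).symm.trans (congrFun h (e i))
  have hsub : μ • x ≤ A *ᵥ x := fun j ↦ by
    by_cases hj : ∃ i, e i = j
    · obtain ⟨i, rfl⟩ := hj
      rw [mulVec_extend_zero_apply A he, hAz, Pi.smul_apply, Pi.smul_apply, hx_range]
    · rw [Pi.smul_apply, hx_compl hj, smul_zero]
      exact Finset.sum_nonneg fun k _ ↦ mul_nonneg (hirr.nonneg j k) (hx k)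
  refine (le_maxEigenvalue_of_smul_le_mulVec hA hx hx0 hsub).lt_of_ne fun heq ↦ ?_
  rw [heq] at hsub
  have hAx := mulVec_eq_of_maxEigenvalue_smul_le_mulVec hA hx hsub
  exact hne fun j ↦ by_contra fun hj ↦
    (pos_of_isIrreducible_of_mulVec_eq hirr hx hx0 hAx j).ne' (hx_compl hj)

end PerronFrobenius

section Irreducible

variable {n : Type*} {A : Matrix n n ℝ}

lemma isIrreducible_of_forall_exists_depth_lt [Nontrivial n] (hA : A.IsHermitian)
    (hA0 : ∀ i j, 0 ≤ A i j) (root : n) (depth : n → ℕ)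
    (hparent : ∀ i, i ≠ root → ∃ j, depth j < depth i ∧ 0 < A i j) : A.IsIrreducible := by
  let := A.toQuiver
  have hpaths (i : n) : Nonempty (Quiver.Path i root) ∧ Nonempty (Quiver.Path root i) := by
    induction h : depth i using Nat.strong_induction_on generalizing i with
    | _ d ih =>
      obtain rfl | hi := eq_or_ne i root
      · exact ⟨⟨.nil⟩, ⟨.nil⟩⟩
      obtain ⟨j, hji, hij⟩ := hparent i hi
      obtain ⟨⟨up⟩, ⟨down⟩⟩ := ih (depth j) (h ▸ hji) j rfl
      let toParent : i ⟶ j := ⟨hij⟩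
      let fromParent : j ⟶ i := ⟨by rwa [← hA.apply, star_trivial]⟩
      exact ⟨⟨toParent.toPath.comp up⟩, ⟨down.cons fromParent⟩⟩
  have hconn : Quiver.IsStronglyConnected n := fun i j ↦
    ⟨(hpaths i).1.some.comp (hpaths j).2.some⟩
  obtain ⟨i, hi⟩ := exists_ne root
  obtain ⟨j, -, hij⟩ := hparent i hi
  exact ⟨hA0, hconn.isSStronglyConnected_of_hom (i₀ := i) (j₀ := j) ⟨hij⟩⟩

end Irreducible

section Tree

variable {p q r p' q' r' : ℕ}

lemma muT_eq_maxEigenvalue (p q r : ℕ) : muT p q r = maxEigenvalue (adjT p q r) :=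
  congrArg sSup (Set.ext fun _ ↦ mem_spectrum_iff_exists_mulVec_eq.symm)

lemma pathEntry_comm (i j : ℕ) : pathEntry i j = pathEntry j i := by
  simp only [pathEntry, or_comm]

lemma adjT_isHermitian (p q r : ℕ) : (adjT p q r).IsHermitian := by
  ext v w
  rcases v with _ | i | i | i <;> rcases w with _ | j | j | j <;>
    simp [adjT, pathEntry_comm]

lemma adjT_nonneg (v w : TVertex p q r) : 0 ≤ adjT p q r v w := by
  rcases v with _ | i | i | i <;> rcases w with _ | j | j | j <;>
    simp only [adjT, tipEntry, pathEntry] <;> first | rfl | (split_ifs <;> norm_num)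

/-- The distance from a vertex of `T_{p,q,r}` to the central vertex. It serves
to define radial test vectors and to root the tree in the proof of irreducibility. -/
def vertexDepth : TVertex p q r → ℕ
  | none => 0
  | some (Sum.inl i) => i + 1
  | some (Sum.inr (Sum.inl i)) => i + 1
  | some (Sum.inr (Sum.inr i)) => i + 1

lemma exists_adjT_pos_of_ne_none (v : TVertex p q r) (hv : v ≠ none) :
    ∃ w, vertexDepth w < vertexDepth v ∧ 0 < adjT p q r v w := by
  rcases v with _ | ⟨_ | i, hi⟩ | ⟨_ | i, hi⟩ | ⟨_ | i, hi⟩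
  · exact absurd rfl hv
  · exact ⟨none, by simp [vertexDepth, adjT, tipEntry]⟩
  · exact ⟨some (.inl ⟨i, by omega⟩), by simp [vertexDepth, adjT, pathEntry]⟩
  · exact ⟨none, by simp [vertexDepth, adjT, tipEntry]⟩
  · exact ⟨some (.inr (.inl ⟨i, by omega⟩)), by simp [vertexDepth, adjT, pathEntry]⟩
  · exact ⟨none, by simp [vertexDepth, adjT, tipEntry]⟩
  · exact ⟨some (.inr (.inr ⟨i, by omega⟩)), by simp [vertexDepth, adjT, pathEntry]⟩

lemma adjT_isIrreducible (hp : 2 ≤ p) : (adjT p q r).IsIrreducible :=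
  have : Nontrivial (TVertex p q r) := ⟨none, some (.inl ⟨0, by omega⟩), by simp⟩
  isIrreducible_of_forall_exists_depth_lt (adjT_isHermitian p q r) adjT_nonneg none
    vertexDepth exists_adjT_pos_of_ne_none

/-- The inclusion of `T_{p,q,r}` into a tree with longer arms, fixing the central vertex;
it exhibits the smaller adjacency matrix as a principal submatrix of the larger one. -/
def vertexInclusion (hp : p ≤ p') (hq : q ≤ q') (hr : r ≤ r') :
    TVertex p q r → TVertex p' q' r' :=
  Option.map (Sum.map (Fin.castLE (Nat.sub_le_sub_right hp 1))
    (Sum.map (Fin.castLE (Nat.sub_le_sub_right hq 1)) (Fin.castLE (Nat.sub_le_sub_right hr 1))))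

lemma vertexInclusion_injective (hp : p ≤ p') (hq : q ≤ q') (hr : r ≤ r') :
    (vertexInclusion hp hq hr).Injective :=
  Option.map_injective <| (Fin.castLE_injective _).sumMap <|
    (Fin.castLE_injective _).sumMap (Fin.castLE_injective _)

lemma adjT_submatrix_vertexInclusion (hp : p ≤ p') (hq : q ≤ q') (hr : r ≤ r') :
    (adjT p' q' r').submatrix (vertexInclusion hp hq hr) (vertexInclusion hp hq hr) =
      adjT p q r := by
  ext v w
  rcases v with _ | i | i | i <;> rcases w with _ | j | j | j <;> rfl

lemma vertexInclusion_not_surjective (hp0 : 1 ≤ p) (hp : p < p') (hq : q ≤ q') (hr : r ≤ r') :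
    ¬ (vertexInclusion hp.le hq hr).Surjective := by
  intro hsurj
  obtain ⟨_ | i | i | i, hi⟩ := hsurj (some (.inl ⟨p - 1, by omega⟩))
  · simp [vertexInclusion] at hi
  · have hval : (i : ℕ) = p - 1 := by simpa [vertexInclusion, Fin.ext_iff] using hi
    exact i.2.ne hval
  · simp [vertexInclusion] at hi
  · simp [vertexInclusion] at hi

theorem muT_lt_muT (hp0 : 1 ≤ p) (hp : p < p') (hq : q ≤ q') (hr : r ≤ r') :
    muT p q r < muT p' q' r' := by
  rw [muT_eq_maxEigenvalue, muT_eq_maxEigenvalue, ← adjT_submatrix_vertexInclusion hp.le hq hr]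
  exact maxEigenvalue_submatrix_lt (adjT_isHermitian p' q' r') (adjT_isIrreducible (by omega))
    (vertexInclusion_injective hp.le hq hr) (vertexInclusion_not_surjective hp0 hp hq hr)

lemma sum_tipEntry_mul (n : ℕ) (g : ℕ → ℝ) :
    ∑ j : Fin n, tipEntry j * g j = if 0 < n then g 0 else 0 := by
  rw [Fin.sum_univ_eq_sum_range (fun j ↦ tipEntry j * g j) n]
  simp [tipEntry]

lemma pathEntry_eq_add (i j : ℕ) :
    pathEntry i j = (if i + 1 = j then 1 else 0) + if j + 1 = i then 1 else 0 := by
  unfold pathEntry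
  split_ifs <;> first | omega | norm_num

lemma tipEntry_mul_add_sum_pathEntry_mul {n i : ℕ} (hi : i < n) (f : ℕ → ℝ) :
    tipEntry i * f 0 + ∑ j : Fin n, pathEntry i j * f (j + 1) =
      f i + if i + 1 < n then f (i + 2) else 0 := by
  rw [Fin.sum_univ_eq_sum_range (fun j ↦ pathEntry i j * f (j + 1)) n]
  simp only [pathEntry_eq_add, add_mul, ite_mul, one_mul, zero_mul, Finset.sum_add_distrib,
    Finset.sum_ite_eq, Finset.mem_range]
  cases i with
  | zero => simp [tipEntry]
  | succ i => simp [tipEntry, (Nat.lt_succ_self i).trans hi, add_comm (f (i + 1))]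

lemma adjT_mulVec_comp_vertexDepth_le {f : ℕ → ℝ} {c : ℝ} (hf : ∀ k, 0 ≤ f k)
    (hcentre : 3 * f 1 ≤ c * f 0) (hstep : ∀ k, f k + f (k + 2) ≤ c * f (k + 1)) :
    adjT p q r *ᵥ (f ∘ vertexDepth) ≤ c • (f ∘ vertexDepth) := by
  have htip (n : ℕ) : ∑ j : Fin n, tipEntry j * f (j + 1) ≤ f 1 := by
    rw [sum_tipEntry_mul n fun j ↦ f (j + 1)]
    split_ifs <;> simp [hf]
  have harm {n : ℕ} (i : Fin n) :
      tipEntry i * f 0 + ∑ j : Fin n, pathEntry i j * f (j + 1) ≤ c * f (i + 1) := by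
    rw [tipEntry_mul_add_sum_pathEntry_mul i.2]
    split_ifs
    · exact hstep i
    · linarith [hstep i, hf (i + 2)]
  rintro (_ | i | i | i) <;>
    simp only [mulVec, dotProduct, Fintype.sum_option, Fintype.sum_sum_type, adjT, vertexDepth,
      Function.comp_apply, Pi.smul_apply, smul_eq_mul, zero_mul, Finset.sum_const_zero, zero_add,
      add_zero, harm]
  linarith [htip (p - 1), htip (q - 1), htip (r - 1)]

lemma smul_comp_vertexDepth_le_adjT_mulVec {f : ℕ → ℝ} {c : ℝ} (hp : 2 ≤ p) (hfp : f p = 0)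
    (hcentre : c * f 0 ≤ 3 * f 1) (hstep : ∀ k, c * f (k + 1) ≤ f k + f (k + 2)) :
    c • (f ∘ vertexDepth) ≤ adjT p p p *ᵥ (f ∘ vertexDepth) := by
  have htip : ∑ j : Fin (p - 1), tipEntry j * f (j + 1) = f 1 := by
    rw [sum_tipEntry_mul (p - 1) fun j ↦ f (j + 1), if_pos (by omega)]
  have harm (i : Fin (p - 1)) :
      c * f (i + 1) ≤ tipEntry i * f 0 + ∑ j : Fin (p - 1), pathEntry i j * f (j + 1) := by
    rw [tipEntry_mul_add_sum_pathEntry_mul i.2]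
    split_ifs with hi
    · exact hstep i
    · have hip : (i : ℕ) + 2 = p := by omega
      simpa only [hip, hfp] using hstep i
  rintro (_ | i | i | i) <;>
    simp only [mulVec, dotProduct, Fintype.sum_option, Fintype.sum_sum_type, adjT, vertexDepth,
      Function.comp_apply, Pi.smul_apply, smul_eq_mul, zero_mul, Finset.sum_const_zero, zero_add,
      add_zero, harm]
  linarith [htip]

lemma vertexDepth_lt (hp : 1 ≤ p) (v : TVertex p p p) : vertexDepth v < p := by
  rcases v with _ | i | i | i <;> simp only [vertexDepth] <;> omega

theorem muT_le_of_radial_supersolution {f : ℕ → ℝ} {c : ℝ} (hf : ∀ k, 0 < f k)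
    (hcentre : 3 * f 1 ≤ c * f 0) (hstep : ∀ k, f k + f (k + 2) ≤ c * f (k + 1)) :
    muT p q r ≤ c := by
  rw [muT_eq_maxEigenvalue]
  exact maxEigenvalue_le_of_mulVec_le_smul (adjT_isHermitian p q r) adjT_nonneg
    (fun v ↦ hf (vertexDepth v)) (adjT_mulVec_comp_vertexDepth_le (fun k ↦ (hf k).le) hcentre hstep)

theorem le_muT_of_radial_subsolution {f : ℕ → ℝ} {c : ℝ} (hp : 2 ≤ p) (hf : ∀ k < p, 0 < f k)
    (hfp : f p = 0) (hcentre : c * f 0 ≤ 3 * f 1)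
    (hstep : ∀ k, c * f (k + 1) ≤ f k + f (k + 2)) : c ≤ muT p p p := by
  rw [muT_eq_maxEigenvalue]
  have hpos (v : TVertex p p p) : 0 < (f ∘ vertexDepth) v := hf _ (vertexDepth_lt (by omega) v)
  exact le_maxEigenvalue_of_smul_le_mulVec (adjT_isHermitian p p p) (fun v ↦ (hpos v).le)
    (fun h ↦ (hpos none).ne' (congrFun h none))
    (smul_comp_vertexDepth_le_adjT_mulVec hp hfp hcentre hstep)

end Tree

section Asymptotics

lemma three_div_sqrt_two_eq : 3 / √2 = √2 + (√2)⁻¹ := by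
  field_simp
  norm_num

theorem muT_le_three_div_sqrt_two (p q r : ℕ) : muT p q r ≤ 3 / √2 := by
  have hinv : √2 * (√2)⁻¹ = 1 := mul_inv_cancel₀ (by positivity)
  refine muT_le_of_radial_supersolution (f := fun k ↦ (√2)⁻¹ ^ k) (fun k ↦ by positivity) ?_ ?_
  · simp [div_eq_mul_inv]
  · intro k
    rw [three_div_sqrt_two_eq]
    exact le_of_eq (by linear_combination -(√2)⁻¹ ^ k * hinv)

theorem muT_lt_three_div_sqrt_two {p : ℕ} (hp : 1 ≤ p) (q r : ℕ) : muT p q r < 3 / √2 :=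
  (muT_lt_muT hp p.lt_succ_self le_rfl le_rfl).trans_le (muT_le_three_div_sqrt_two _ _ _)

theorem add_inv_le_muT {p : ℕ} {t : ℝ} (hp : 2 ≤ p) (ht : 1 < t)
    (h : 2 * t ^ 2 - 1 ≤ t ^ (2 * p) * (2 - t ^ 2)) : t + t⁻¹ ≤ muT p p p := by
  have ht0 : 0 < t := by linarith
  have hinv : t * t⁻¹ = 1 := mul_inv_cancel₀ ht0.ne'
  have hpow (k : ℕ) : t ^ k * t⁻¹ ^ k = 1 := by rw [← mul_pow, hinv, one_pow]
  -- A rescaling of `sinh ((p - k) log t)`, the solution of `f k + f (k + 2) = (t + t⁻¹) f (k + 1)`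
  -- vanishing just beyond the ends of the arms.
  refine le_muT_of_radial_subsolution (f := fun k ↦ t⁻¹ ^ k - t⁻¹ ^ (2 * p) * t ^ k) hp
    (fun k hk ↦ ?_) ?_ ?_ fun k ↦ le_of_eq ?_
  · have hlt : t⁻¹ ^ (2 * p) < t⁻¹ ^ (2 * k) :=
      pow_lt_pow_right_of_lt_one₀ (by positivity) (inv_lt_one_of_one_lt₀ ht) (by omega)
    calc 0 < t ^ k * (t⁻¹ ^ (2 * k) - t⁻¹ ^ (2 * p)) := mul_pos (by positivity) (sub_pos.2 hlt)
      _ = t⁻¹ ^ k - t⁻¹ ^ (2 * p) * t ^ k := by linear_combination t⁻¹ ^ k * hpow k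
  · linear_combination -t⁻¹ ^ p * hpow p
  · have hscaled : t⁻¹ ^ (2 * p) * (2 * t - t⁻¹) ≤ 2 * t⁻¹ - t :=
      calc t⁻¹ ^ (2 * p) * (2 * t - t⁻¹)
          = t⁻¹ ^ (2 * p) * t⁻¹ * (2 * t ^ 2 - 1) := by
            linear_combination (-2) * t⁻¹ ^ (2 * p) * t * hinv
        _ ≤ t⁻¹ ^ (2 * p) * t⁻¹ * (t ^ (2 * p) * (2 - t ^ 2)) := by gcongr
        _ = 2 * t⁻¹ - t := by
            linear_combination t⁻¹ * (2 - t ^ 2) * hpow (2 * p) - t * hinv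
    simp only [pow_zero, pow_one, mul_one]
    linarith
  · linear_combination (t⁻¹ ^ k - t⁻¹ ^ (2 * p) * t ^ k) * hinv

lemma three_div_sqrt_two_sub_add_inv_lt {t : ℝ} (ht1 : 1 ≤ t) (ht2 : t < √2) :
    3 / √2 - (t + t⁻¹) < 2 - t ^ 2 := by
  have hinv : 0 < t⁻¹ * (√2)⁻¹ := by positivity
  calc 3 / √2 - (t + t⁻¹) = (√2 - t) * (1 - t⁻¹ * (√2)⁻¹) := by
        rw [three_div_sqrt_two_eq]
        field_simp
        ring
    _ < (√2 - t) * (√2 + t) := by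
        gcongr
        linarith
    _ = 2 - t ^ 2 := by
        linear_combination Real.sq_sqrt (zero_le_two (α := ℝ))

lemma eventually_le_two_mul_mul_one_sub_pow_pow {y : ℝ} (hy : y ∈ Set.Ioo (1 / 2) 1) (C : ℝ) :
    ∀ᶠ p : ℕ in atTop, C ≤ (2 * y * (1 - y ^ p)) ^ p := by
  have hlim : Tendsto (fun p : ℕ ↦ 2 * y * (1 - y ^ p)) atTop (𝓝 (2 * y)) := by
    simpa using ((tendsto_pow_atTop_nhds_zero_of_lt_one (by linarith [hy.1]) hy.2).const_sub
      1).const_mul (2 * y)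
  obtain ⟨b, hb1, hby⟩ := exists_between (show 1 < 2 * y by linarith [hy.1])
  filter_upwards [hlim.eventually_const_le hby,
    (tendsto_pow_atTop_atTop_of_one_lt hb1).eventually_ge_atTop C] with p hbp hC
  exact hC.trans (by gcongr)

theorem eventually_three_div_sqrt_two_sub_lt_muT {y : ℝ} (hy : y ∈ Set.Ioo (1 / 2) 1) :
    ∀ᶠ p : ℕ in atTop, 3 / √2 - 2 * y ^ p < muT p p p := by
  have hy0 : 0 < y := by linarith [hy.1]
  filter_upwards [eventually_ge_atTop 2, eventually_le_two_mul_mul_one_sub_pow_pow hy (3 / 2),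
    (tendsto_pow_atTop_nhds_zero_of_lt_one hy0.le hy.2).eventually_lt_const one_half_pos]
    with p hp hgrowth hhalf
  have hyp : 0 < y ^ p := pow_pos hy0 p
  set t := √(2 - 2 * y ^ p)
  have ht_sq : t ^ 2 = 2 - 2 * y ^ p := Real.sq_sqrt (by linarith)
  have ht1 : 1 < t := Real.lt_sqrt_of_sq_lt (by linarith)
  have ht2 : t < √2 := Real.sqrt_lt_sqrt (by linarith) (by linarith)
  have hcentre : 2 * t ^ 2 - 1 ≤ t ^ (2 * p) * (2 - t ^ 2) :=
    calc 2 * t ^ 2 - 1 ≤ 2 * (3 / 2) := by linarith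
      _ ≤ 2 * (2 * y * (1 - y ^ p)) ^ p := by gcongr
      _ = t ^ (2 * p) * (2 - t ^ 2) := by
        rw [pow_mul, ht_sq, ← mul_one_sub, mul_pow, mul_pow, mul_pow]
        ring
  linarith [three_div_sqrt_two_sub_add_inv_lt ht1.le ht2, add_inv_le_muT hp ht1 hcentre]

theorem tendsto_muT_self : Tendsto (fun p : ℕ ↦ muT p p p) atTop (𝓝 (3 / √2)) := by
  have hlower : Tendsto (fun p : ℕ ↦ 3 / √2 - 2 * (3 / 4 : ℝ) ^ p) atTop (𝓝 (3 / √2)) := by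
    simpa using ((tendsto_pow_atTop_nhds_zero_of_lt_one (r := (3 / 4 : ℝ)) (by norm_num)
      (by norm_num)).const_mul 2).const_sub (3 / √2)
  have hbound := eventually_three_div_sqrt_two_sub_lt_muT (y := 3 / 4) (by norm_num)
  exact tendsto_of_tendsto_of_tendsto_of_le_of_le' hlower tendsto_const_nhds
    (hbound.mono fun _ h ↦ h.le) (.of_forall fun p ↦ muT_le_three_div_sqrt_two p p p)

end Asymptotics

/-- The sequence `μ(p,p,p)` is strictly increasing, bounded above by `3/√2`,
converges to `3/√2`, and for every `y₀ ∈ (1/2, 1)` eventually satisfies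
`μ(p,p,p) > 3/√2 - 2 y₀^p`. -/
theorem muT_ppp_tendsto_three_over_sqrt_two :
    (∀ p : ℕ, 2 ≤ p → muT p p p < muT (p + 1) (p + 1) (p + 1)) ∧
    (∀ p : ℕ, 2 ≤ p → muT p p p < 3 / Real.sqrt 2) ∧
    Filter.Tendsto (fun p : ℕ => muT p p p) Filter.atTop (nhds (3 / Real.sqrt 2)) ∧
    ∀ y₀ : ℝ, y₀ ∈ Set.Ioo (1/2 : ℝ) 1 →
      ∃ p₀ : ℕ, ∀ p : ℕ, p₀ ≤ p → 3 / Real.sqrt 2 - 2 * y₀ ^ p < muT p p p := by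
  refine ⟨fun p hp ↦ ?_, fun p hp ↦ ?_, tendsto_muT_self, fun y₀ hy₀ ↦ ?_⟩
  · exact muT_lt_muT (by omega) p.lt_succ_self p.le_succ p.le_succ
  · exact muT_lt_three_div_sqrt_two (by omega) p p
  · exact eventually_atTop.1 (eventually_three_div_sqrt_two_sub_lt_muT hy₀)
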